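/- arXiv:1605.07645 — 3 statements merged into one kernel-verified Lean document; each statement's English description precedes it below -/
import Mathlib

section
/- Let H be a real inner product space, let V₀ be a subspace of H, and let u, û, w ∈ H. Suppose φ ∈ V₀ satisfies ⟨φ, v⟩ = ⟨u − w, v⟩ for all v ∈ V₀, and suppose γ ≥ 0 satisfies γ·‖û − w‖² ≤ ‖φ‖². Then for every δ₁ > 0, ‖û − (w + φ)‖² ≤ (1 + δ₁ − γ)·‖û − w‖² + (2 + 1/δ₁)·‖u − û‖². -/
open RealInnerProductSpace

/-!
Testing the Riesz identity with `φ` itself gives `⟪u - w, φ⟫ = ‖φ‖²`. Expanding the square,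
`‖(uh - w) - φ‖² = ‖uh - w‖² - ‖φ‖² + 2 ⟪u - uh, φ⟫`: the correction gains `‖φ‖² ≥ γ ‖uh - w‖²`, and
the only loss is the cross term, caused by `φ` representing the residual of `u` rather than of `uh`.
Since `‖φ‖ ≤ ‖u - w‖ ≤ ‖uh - w‖ + ‖u - uh‖`, Cauchy–Schwarz and Young's inequality with weight `δ₁`
absorb this term.
-/

section ResidualCorrection

open RCLike

variable {𝕜 E : Type*} [RCLike 𝕜] [SeminormedAddCommGroup E] [InnerProductSpace 𝕜 E]

theorem norm_le_of_norm_sq_le_re_inner {x φ : E} (h : ‖φ‖ ^ 2 ≤ re (inner 𝕜 x φ)) :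
    ‖φ‖ ≤ ‖x‖ := by
  have hmul : ‖φ‖ * ‖φ‖ ≤ ‖x‖ * ‖φ‖ := (sq ‖φ‖).symm.trans_le (h.trans (re_inner_le_norm x φ))
  rcases (norm_nonneg φ).eq_or_lt with hzero | hpos
  · exact hzero ▸ norm_nonneg x
  · exact le_of_mul_le_mul_right hmul hpos

theorem norm_sub_sq_of_re_inner_eq_norm_sq {x φ : E} (h : re (inner 𝕜 x φ) = ‖φ‖ ^ 2) (y : E) :
    ‖y - φ‖ ^ 2 = ‖y‖ ^ 2 - ‖φ‖ ^ 2 + 2 * re (inner 𝕜 (x - y) φ) := by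
  rw [norm_sub_sq (𝕜 := 𝕜), inner_sub_left, map_sub, h]
  ring

variable (𝕜) in
theorem two_mul_re_inner_sub_le_of_norm_le {x φ : E} (h : ‖φ‖ ≤ ‖x‖) (y : E) {δ : ℝ}
    (hδ : 0 < δ) :
    2 * re (inner 𝕜 (x - y) φ) ≤ δ * ‖y‖ ^ 2 + (2 + 1 / δ) * ‖x - y‖ ^ 2 := by
  have hφ : ‖φ‖ ≤ ‖y‖ + ‖x - y‖ := h.trans (norm_le_norm_add_norm_sub' x y)
  have young : 2 * ‖y‖ * ‖x - y‖ ≤ δ * ‖y‖ ^ 2 + δ⁻¹ * ‖x - y‖ ^ 2 :=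
    two_mul_le_add_mul_sq hδ
  calc
    2 * re (inner 𝕜 (x - y) φ) ≤ 2 * (‖x - y‖ * ‖φ‖) := by
      gcongr
      exact re_inner_le_norm (x - y) φ
    _ ≤ 2 * (‖x - y‖ * (‖y‖ + ‖x - y‖)) := by gcongr
    _ = 2 * ‖y‖ * ‖x - y‖ + 2 * ‖x - y‖ ^ 2 := by ring
    _ ≤ δ * ‖y‖ ^ 2 + δ⁻¹ * ‖x - y‖ ^ 2 + 2 * ‖x - y‖ ^ 2 := by gcongr
    _ = δ * ‖y‖ ^ 2 + (2 + 1 / δ) * ‖x - y‖ ^ 2 := by ring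

theorem stmt_6_general (V₀ : Submodule 𝕜 E) (u uh w φ : E) (hφ : φ ∈ V₀)
    (hRiesz : ∀ v ∈ V₀, inner 𝕜 φ v = inner 𝕜 (u - w) v)
    (γ : ℝ) (hγle : γ * ‖uh - w‖ ^ 2 ≤ ‖φ‖ ^ 2) (δ₁ : ℝ) (hδ₁ : 0 < δ₁) :
    ‖uh - (w + φ)‖ ^ 2
      ≤ (1 + δ₁ - γ) * ‖uh - w‖ ^ 2 + (2 + 1 / δ₁) * ‖u - uh‖ ^ 2 := by
  have hself : re (inner 𝕜 (u - w) φ) = ‖φ‖ ^ 2 := by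
    rw [← hRiesz φ hφ, inner_self_eq_norm_sq]
  have hnorm : ‖φ‖ ≤ ‖u - w‖ := norm_le_of_norm_sq_le_re_inner hself.ge
  have hsub : (u - w) - (uh - w) = u - uh := sub_sub_sub_cancel_right u uh w
  have hcross : 2 * re (inner 𝕜 (u - uh) φ)
      ≤ δ₁ * ‖uh - w‖ ^ 2 + (2 + 1 / δ₁) * ‖u - uh‖ ^ 2 :=
    hsub ▸ two_mul_re_inner_sub_le_of_norm_le 𝕜 hnorm (uh - w) hδ₁
  calc
    ‖uh - (w + φ)‖ ^ 2 = ‖uh - w‖ ^ 2 - ‖φ‖ ^ 2 + 2 * re (inner 𝕜 (u - uh) φ) := by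
      rw [← sub_sub, norm_sub_sq_of_re_inner_eq_norm_sq hself, hsub]
    _ ≤ ‖uh - w‖ ^ 2 - γ * ‖uh - w‖ ^ 2
        + (δ₁ * ‖uh - w‖ ^ 2 + (2 + 1 / δ₁) * ‖u - uh‖ ^ 2) := by gcongr
    _ = (1 + δ₁ - γ) * ‖uh - w‖ ^ 2 + (2 + 1 / δ₁) * ‖u - uh‖ ^ 2 := by ring

end ResidualCorrection

/-- Single-step error contraction estimate for online adaptive enrichment. -/
theorem stmt_6 {H : Type*} [NormedAddCommGroup H] [InnerProductSpace ℝ H]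
    (V₀ : Submodule ℝ H) (u uh w φ : H) (hφ : φ ∈ V₀)
    (hRiesz : ∀ v ∈ V₀, ⟪φ, v⟫ = ⟪u - w, v⟫)
    (γ : ℝ) (hγ : 0 ≤ γ) (hγle : γ * ‖uh - w‖ ^ 2 ≤ ‖φ‖ ^ 2)
    (δ₁ : ℝ) (hδ₁ : 0 < δ₁) :
    ‖uh - (w + φ)‖ ^ 2
      ≤ (1 + δ₁ - γ) * ‖uh - w‖ ^ 2 + (2 + 1 / δ₁) * ‖u - uh‖ ^ 2 :=
  stmt_6_general V₀ u uh w φ hφ hRiesz γ hγle δ₁ hδ₁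
end

section
/- Let H be a real inner product space, let V₀ be a subspace of H, and let u, û, w ∈ H. Suppose φ ∈ V₀ satisfies ⟨φ, v⟩ = ⟨u − w, v⟩ for all v ∈ V₀, suppose γ ≥ 0 satisfies γ·‖û − w‖² ≤ ‖φ‖², and suppose w' ∈ H satisfies ‖u − w'‖ ≤ ‖u − (w + φ)‖. Then for all δ₁ > 0 and δ₂ > 0, ‖u − w'‖² ≤ (1 + δ₂)·(1 + δ₁ − γ)·‖û − w‖² + ((1 + δ₂)·(2 + 1/δ₁) + 1 + 1/δ₂)·‖u − û‖². -/
open RealInnerProductSpace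

/-!
Testing the defining equation of `φ` against `φ` itself shows that the correction removes exactly
`‖φ‖²` from the squared error `‖u - w‖²`. Young's inequality with parameter `δ₁` splits `‖u - w‖²`
through `uh`, which already bounds `‖u - w'‖²` by
`S = (1 + δ₁ - γ) * ‖uh - w‖² + (1 + 1 / δ₁) * ‖u - uh‖²`.
The sign of `1 + δ₁ - γ` is unknown, but `S` dominates a square, so `S ≤ (1 + δ₂) * S`.
-/

theorem norm_add_sq_le_young {E : Type*} [SeminormedAddGroup E] (x y : E) {δ : ℝ} (hδ : 0 < δ) :
    ‖x + y‖ ^ 2 ≤ (1 + δ) * ‖x‖ ^ 2 + (1 + 1 / δ) * ‖y‖ ^ 2 :=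
  calc ‖x + y‖ ^ 2
    _ ≤ (‖x‖ + ‖y‖) ^ 2 := by gcongr; exact norm_add_le x y
    _ = ‖x‖ ^ 2 + 2 * ‖x‖ * ‖y‖ + ‖y‖ ^ 2 := add_sq _ _
    _ ≤ ‖x‖ ^ 2 + (δ * ‖x‖ ^ 2 + δ⁻¹ * ‖y‖ ^ 2) + ‖y‖ ^ 2 := by
      gcongr; exact two_mul_le_add_mul_sq hδ
    _ = (1 + δ) * ‖x‖ ^ 2 + (1 + 1 / δ) * ‖y‖ ^ 2 := by ring

section InnerProduct

variable {𝕜 H : Type*} [RCLike 𝕜] [SeminormedAddCommGroup H] [InnerProductSpace 𝕜 H]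

theorem norm_sub_sq_eq_sub_of_inner_self_eq {x y : H} (h : inner 𝕜 y y = inner 𝕜 x y) :
    ‖x - y‖ ^ 2 = ‖x‖ ^ 2 - ‖y‖ ^ 2 := by
  rw [norm_sub_sq (𝕜 := 𝕜), ← h, inner_self_eq_norm_sq]
  ring

theorem norm_sub_add_sq_le_of_inner_self_eq {u uh w φ : H}
    (hφ : inner 𝕜 φ φ = inner 𝕜 (u - w) φ) {γ : ℝ} (hγ : γ * ‖uh - w‖ ^ 2 ≤ ‖φ‖ ^ 2)
    {δ : ℝ} (hδ : 0 < δ) :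
    ‖u - (w + φ)‖ ^ 2
      ≤ (1 + δ - γ) * ‖uh - w‖ ^ 2 + (1 + 1 / δ) * ‖u - uh‖ ^ 2 := by
  have young : ‖u - w‖ ^ 2 ≤ (1 + δ) * ‖uh - w‖ ^ 2 + (1 + 1 / δ) * ‖u - uh‖ ^ 2 := by
    simpa only [sub_add_sub_cancel'] using norm_add_sq_le_young (uh - w) (u - uh) hδ
  calc ‖u - (w + φ)‖ ^ 2
    _ = ‖u - w‖ ^ 2 - ‖φ‖ ^ 2 := by
      rw [← sub_sub, norm_sub_sq_eq_sub_of_inner_self_eq hφ]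
    _ ≤ (1 + δ) * ‖uh - w‖ ^ 2 + (1 + 1 / δ) * ‖u - uh‖ ^ 2 - γ * ‖uh - w‖ ^ 2 := by gcongr
    _ = (1 + δ - γ) * ‖uh - w‖ ^ 2 + (1 + 1 / δ) * ‖u - uh‖ ^ 2 := by ring

theorem stmt_7_general (V₀ : Submodule 𝕜 H) {u uh w φ : H} (hφ : φ ∈ V₀)
    (hRiesz : ∀ v ∈ V₀, inner 𝕜 φ v = inner 𝕜 (u - w) v)
    {γ : ℝ} (hγ : γ * ‖uh - w‖ ^ 2 ≤ ‖φ‖ ^ 2)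
    {w' : H} (hw' : ‖u - w'‖ ≤ ‖u - (w + φ)‖)
    {δ₁ δ₂ : ℝ} (hδ₁ : 0 < δ₁) (hδ₂ : 0 < δ₂) :
    ‖u - w'‖ ^ 2
      ≤ (1 + δ₂) * (1 + δ₁ - γ) * ‖uh - w‖ ^ 2
        + ((1 + δ₂) * (2 + 1 / δ₁) + 1 + 1 / δ₂) * ‖u - uh‖ ^ 2 := by
  set S := (1 + δ₁ - γ) * ‖uh - w‖ ^ 2 + (1 + 1 / δ₁) * ‖u - uh‖ ^ 2 with hS
  have error_le : ‖u - w'‖ ^ 2 ≤ S :=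
    (pow_le_pow_left₀ (norm_nonneg _) hw' 2).trans
      (norm_sub_add_sq_le_of_inner_self_eq (hRiesz φ hφ) hγ hδ₁)
  have S_nonneg : 0 ≤ S := (sq_nonneg _).trans error_le
  have slack_nonneg : 0 ≤ ((1 + δ₂) + 1 + 1 / δ₂) * ‖u - uh‖ ^ 2 := by positivity
  calc ‖u - w'‖ ^ 2
    _ ≤ S := error_le
    _ ≤ (1 + δ₂) * S := le_mul_of_one_le_left S_nonneg (by linarith)
    _ ≤ (1 + δ₂) * S + ((1 + δ₂) + 1 + 1 / δ₂) * ‖u - uh‖ ^ 2 :=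
      le_add_of_nonneg_right slack_nonneg
    _ = (1 + δ₂) * (1 + δ₁ - γ) * ‖uh - w‖ ^ 2
        + ((1 + δ₂) * (2 + 1 / δ₁) + 1 + 1 / δ₂) * ‖u - uh‖ ^ 2 := by rw [hS]; ring

end InnerProduct

/-- Abstract online convergence theorem for the adaptive GMsFEM (one step). -/
theorem stmt_7 {H : Type*} [NormedAddCommGroup H] [InnerProductSpace ℝ H]
    (V₀ : Submodule ℝ H) (u uh w φ : H) (hφ : φ ∈ V₀)
    (hRiesz : ∀ v ∈ V₀, ⟪φ, v⟫ = ⟪u - w, v⟫)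
    (γ : ℝ) (hγ : 0 ≤ γ) (hγle : γ * ‖uh - w‖ ^ 2 ≤ ‖φ‖ ^ 2)
    (w' : H) (hw' : ‖u - w'‖ ≤ ‖u - (w + φ)‖)
    (δ₁ δ₂ : ℝ) (hδ₁ : 0 < δ₁) (hδ₂ : 0 < δ₂) :
    ‖u - w'‖ ^ 2
      ≤ (1 + δ₂) * (1 + δ₁ - γ) * ‖uh - w‖ ^ 2
        + ((1 + δ₂) * (2 + 1 / δ₁) + 1 + 1 / δ₂) * ‖u - uh‖ ^ 2 :=
  stmt_7_general V₀ hφ hRiesz hγle hw' hδ₁ hδ₂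
end

section
/- Let H be a real inner product space, let S be a finite index set, and let (V_j)_{j ∈ S} be subspaces of H that are pairwise orthogonal (i.e., ⟨x, y⟩ = 0 whenever x ∈ V_i, y ∈ V_j, i ≠ j). Let u, û, w ∈ H and suppose that for each j ∈ S, φ_j ∈ V_j satisfies ⟨φ_j, v⟩ = ⟨u − w, v⟩ for all v ∈ V_j. Set Φ = Σ_{j ∈ S} φ_j. Then ‖û − (w + Φ)‖² = ‖û − w‖² − Σ_{j ∈ S} ‖φ_j‖² + 2·⟨u − û, Φ⟩. -/
open RealInnerProductSpace

section

variable {𝕜 H ι : Type*} [RCLike 𝕜] [SeminormedAddCommGroup H] [InnerProductSpace 𝕜 H]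

theorem inner_sum_eq_sum_norm_sq {S : Finset ι} {φ : ι → H} {r : H}
    (hr : ∀ j ∈ S, inner 𝕜 r (φ j) = inner 𝕜 (φ j) (φ j)) :
    inner 𝕜 r (∑ j ∈ S, φ j) = ∑ j ∈ S, (‖φ j‖ : 𝕜) ^ 2 := by
  rw [inner_sum]
  exact Finset.sum_congr rfl fun j hj => (hr j hj).trans (inner_self_eq_norm_sq_to_K (φ j))

theorem norm_sum_sq_of_pairwise_inner_eq_zero {S : Finset ι} {φ : ι → H}
    (hφ : (S : Set ι).Pairwise fun i j => inner 𝕜 (φ i) (φ j) = 0) :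
    ‖∑ j ∈ S, φ j‖ ^ 2 = ∑ j ∈ S, ‖φ j‖ ^ 2 := by
  have inner_sum_left : ∀ j ∈ S, inner 𝕜 (∑ i ∈ S, φ i) (φ j) = inner 𝕜 (φ j) (φ j) := by
    intro j hj
    rw [sum_inner]
    exact Finset.sum_eq_single_of_mem j hj fun i hi hij => hφ hi hj hij
  have norm_sq_cast : (‖∑ j ∈ S, φ j‖ : 𝕜) ^ 2 = ∑ j ∈ S, (‖φ j‖ : 𝕜) ^ 2 := by
    rw [← inner_self_eq_norm_sq_to_K, inner_sum_eq_sum_norm_sq inner_sum_left]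
  exact_mod_cast norm_sq_cast

theorem norm_sub_add_sq_of_re_inner_eq_norm_sq {u w Φ : H} (uh : H)
    (hΦ : RCLike.re (inner 𝕜 (u - w) Φ) = ‖Φ‖ ^ 2) :
    ‖uh - (w + Φ)‖ ^ 2
      = ‖uh - w‖ ^ 2 - ‖Φ‖ ^ 2 + 2 * RCLike.re (inner 𝕜 (u - uh) Φ) := by
  have inner_split : RCLike.re (inner 𝕜 (uh - w) Φ)
      = ‖Φ‖ ^ 2 - RCLike.re (inner 𝕜 (u - uh) Φ) := by
    rw [← sub_sub_sub_cancel_left w uh u, inner_sub_left, map_sub, hΦ]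
  rw [← sub_sub, norm_sub_sq (𝕜 := 𝕜), inner_split]
  ring

theorem stmt_8_general (S : Finset ι) (Vs : ι → Submodule 𝕜 H)
    (horth : ∀ i ∈ S, ∀ j ∈ S, i ≠ j → ∀ x ∈ Vs i, ∀ y ∈ Vs j, inner 𝕜 x y = 0)
    (u uh w : H) (φ : ι → H) (hmem : ∀ j ∈ S, φ j ∈ Vs j)
    (hRiesz : ∀ j ∈ S, ∀ v ∈ Vs j, inner 𝕜 (φ j) v = inner 𝕜 (u - w) v) :
    ‖uh - (w + ∑ j ∈ S, φ j)‖ ^ 2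
      = ‖uh - w‖ ^ 2 - ∑ j ∈ S, ‖φ j‖ ^ 2
        + 2 * RCLike.re (inner 𝕜 (u - uh) (∑ j ∈ S, φ j)) := by
  have pythagoras : ‖∑ j ∈ S, φ j‖ ^ 2 = ∑ j ∈ S, ‖φ j‖ ^ 2 :=
    norm_sum_sq_of_pairwise_inner_eq_zero (𝕜 := 𝕜) fun i hi j hj hij =>
      horth i hi j hj hij _ (hmem i hi) _ (hmem j hj)
  have inner_residual : inner 𝕜 (u - w) (∑ j ∈ S, φ j) = ∑ j ∈ S, (‖φ j‖ : 𝕜) ^ 2 :=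
    inner_sum_eq_sum_norm_sq fun j hj => (hRiesz j hj _ (hmem j hj)).symm
  have re_inner_residual :
      RCLike.re (inner 𝕜 (u - w) (∑ j ∈ S, φ j)) = ‖∑ j ∈ S, φ j‖ ^ 2 := by
    rw [inner_residual, pythagoras]
    norm_cast
  rw [← pythagoras]
  exact norm_sub_add_sq_of_re_inner_eq_norm_sq uh re_inner_residual

end

/-- Error identity for simultaneous online enrichment on pairwise orthogonal
local spaces. -/
theorem stmt_8 {H : Type*} {ι : Type*} [NormedAddCommGroup H]
    [InnerProductSpace ℝ H] (S : Finset ι) (Vs : ι → Submodule ℝ H)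
    (horth : ∀ i ∈ S, ∀ j ∈ S, i ≠ j → ∀ x ∈ Vs i, ∀ y ∈ Vs j, ⟪x, y⟫ = 0)
    (u uh w : H) (φ : ι → H) (hmem : ∀ j ∈ S, φ j ∈ Vs j)
    (hRiesz : ∀ j ∈ S, ∀ v ∈ Vs j, ⟪φ j, v⟫ = ⟪u - w, v⟫) :
    ‖uh - (w + ∑ j ∈ S, φ j)‖ ^ 2
      = ‖uh - w‖ ^ 2 - ∑ j ∈ S, ‖φ j‖ ^ 2 + 2 * ⟪u - uh, ∑ j ∈ S, φ j⟫ :=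
  stmt_8_general S Vs horth u uh w φ hmem hRiesz
end
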